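/- Let M be a ℤ-module, B : M × M → ℤ a ℤ-bilinear form, t₁, …, t_l ∈ M and ε₁, …, ε_l ∈ {1, −1}. For each k let τ_k : M → M be the map τ_k(x) = x + ε_k · B(t_k, x) · t_k. Then for every a ∈ M the composition Φ = τ_l ∘ ⋯ ∘ τ₁ satisfies Φ(a) = a + Σ_{m=1}^{l} Σ_{1 ≤ k₁ < k₂ < ⋯ < k_m ≤ l} ε_{k₁}⋯ε_{k_m} · B(t_{k_m}, t_{k_{m−1}}) · B(t_{k_{m−1}}, t_{k_{m−2}}) ⋯ B(t_{k₂}, t_{k₁}) · B(t_{k₁}, a) · t_{k_m} (where for m = 1 the empty product of factors B(t_{k_j}, t_{k_{j−1}}) is 1). -/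

import Mathlib

/-!
Write `τ_k = 1 + N_k` with `N_k x = (ε_k * B (t_k, x)) • t_k`. Since each `N_k` is additive,
expanding the composition `(1 + N_l) ∘ ⋯ ∘ (1 + N_1)` chooses the indices `k₁ < ⋯ < k_m` at which
`N_k` is applied, so the composition is the sum of all `N_{k_m} ∘ ⋯ ∘ N_{k₁}`. Each `N_k` takes
values in the multiples of `t_k`, so such a composite collapses to a multiple of `t_{k_m}`.
-/

section StrictlyMonotoneTuples

variable {l m : ℕ}

theorem strictMono_snoc_iff {α : Type*} [Preorder α] {k : Fin m → α} {b : α} :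
    StrictMono (Fin.snoc k b : Fin (m + 1) → α) ↔ StrictMono k ∧ ∀ j, k j < b := by
  simpa [Fin.insertNth_last', Fin.castSucc_lt_last] using
    Fin.strictMono_insertNth_iff (Fin.last m) b k

theorem forall_ne_last_iff_of_strictMono {k : Fin (m + 1) → Fin (l + 1)} (hk : StrictMono k) :
    (∀ j, k j ≠ Fin.last l) ↔ k (Fin.last m) ≠ Fin.last l := by
  refine ⟨fun h => h _, fun h j => ?_⟩
  exact ((hk.monotone (Fin.le_last j)).trans_lt (Fin.lt_last_iff_ne_last.2 h)).ne

theorem filter_strictMono_eq_empty (h : l < m) :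
    ({k : Fin m → Fin l | StrictMono k} : Finset _) = ∅ := by
  refine Finset.filter_eq_empty_iff.2 fun k _ hk => ?_
  exact h.not_ge (by simpa using Fintype.card_le_of_injective k hk.injective)

variable {A : Type*} [AddCommMonoid A]

theorem sum_strictMono_forall_ne_last (F : (Fin m → Fin (l + 1)) → A) :
    ∑ k : Fin m → Fin (l + 1) with StrictMono k ∧ ∀ j, k j ≠ Fin.last l, F k =
      ∑ k : Fin m → Fin l with StrictMono k, F (Fin.castSucc ∘ k) := by
  symm
  refine Finset.sum_nbij (Fin.castSucc ∘ ·) ?_ (Fin.castSucc_injective l).comp_left.injOn ?_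
    fun _ _ => rfl
  · simp +contextual [Fin.strictMono_castSucc.comp]
  · intro k hk
    obtain ⟨hmono, hne⟩ := (Finset.mem_filter.1 hk).2
    choose k' hk' using fun j => Fin.exists_castSucc_eq.2 (hne j)
    obtain rfl := funext hk'
    exact ⟨k', by simpa using show StrictMono k' from fun _ _ hij => hmono hij, rfl⟩

theorem sum_strictMono_eq_last (F : (Fin (m + 1) → Fin (l + 1)) → A) :
    ∑ k : Fin (m + 1) → Fin (l + 1) with StrictMono k ∧ k (Fin.last m) = Fin.last l, F k =
      ∑ k : Fin m → Fin (l + 1) with StrictMono k ∧ ∀ j, k j ≠ Fin.last l,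
        F (Fin.snoc k (Fin.last l)) := by
  refine (Finset.sum_nbij' (Fin.snoc · (Fin.last l)) Fin.init ?_ ?_ ?_ ?_ ?_).symm
  · simp +contextual [strictMono_snoc_iff, Fin.lt_last_iff_ne_last]
  · intro k hk
    obtain ⟨hmono, hlast⟩ := (Finset.mem_filter.1 hk).2
    rw [← Fin.snoc_init_self k, hlast, strictMono_snoc_iff] at hmono
    simpa [Fin.lt_last_iff_ne_last] using hmono
  · simp
  · intro k hk
    simp only [← (Finset.mem_filter.1 hk).2.2, Fin.snoc_init_self]
  · simp

theorem sum_strictMono_succ (F : (Fin (m + 1) → Fin (l + 1)) → A) :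
    ∑ k : Fin (m + 1) → Fin (l + 1) with StrictMono k, F k =
      ∑ k : Fin (m + 1) → Fin l with StrictMono k, F (Fin.castSucc ∘ k) +
        ∑ k : Fin m → Fin l with StrictMono k,
          F (Fin.snoc (Fin.castSucc ∘ k) (Fin.last l)) := by
  rw [← sum_strictMono_forall_ne_last, ← sum_strictMono_forall_ne_last
    (fun k => F (Fin.snoc k (Fin.last l))), ← sum_strictMono_eq_last,
    ← Finset.sum_filter_not_add_sum_filter _ (fun k => k (Fin.last m) = Fin.last l),
    Finset.filter_filter, Finset.filter_filter]
  congr 2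
  ext k
  simp +contextual [forall_ne_last_iff_of_strictMono]

theorem foldl_add_apply_eq_sum (N : Fin l → A →+ A) (a : A) :
    Fin.foldl l (fun x i => x + N i x) a =
      ∑ m ∈ Finset.range (l + 1), ∑ k : Fin m → Fin l with StrictMono k,
        Fin.foldl m (fun x j => N (k j) x) a := by
  induction l with
  | zero => simp [Subsingleton.strictMono]
  | succ l ih =>
    let S (m : ℕ) : A := ∑ k : Fin m → Fin l with StrictMono k,
      Fin.foldl m (fun x j => N (k j).castSucc x) a
    have S_zero : S 0 = a := by simp [S, Subsingleton.strictMono]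
    have S_top : S (l + 1) = 0 := by simp [S, filter_strictMono_eq_empty]
    have S_shift : ∑ m ∈ Finset.range (l + 1), S m =
        ∑ m ∈ Finset.range (l + 1), S (m + 1) + a := by
      rw [← S_zero, ← Finset.sum_range_succ', Finset.sum_range_succ _ (l + 1), S_top, add_zero]
    have S_step (m : ℕ) : ∑ k : Fin (m + 1) → Fin (l + 1) with StrictMono k,
        Fin.foldl (m + 1) (fun x j => N (k j) x) a = S (m + 1) + N (Fin.last l) (S m) := by
      simp only [S, sum_strictMono_succ, Function.comp_apply, map_sum,
        Fin.foldl_succ_last _ a, Fin.snoc_castSucc, Fin.snoc_last]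
    calc Fin.foldl (l + 1) (fun x i => x + N i x) a
      _ = ∑ m ∈ Finset.range (l + 1), S m + N (Fin.last l) (∑ m ∈ Finset.range (l + 1), S m) := by
        rw [Fin.foldl_succ_last, ih fun i => N i.castSucc]
      _ = ∑ m ∈ Finset.range (l + 1), (S (m + 1) + N (Fin.last l) (S m)) + a := by
        rw [map_sum, S_shift, Finset.sum_add_distrib, add_right_comm]
      _ = _ := by
        rw [Finset.sum_range_succ' _ (l + 1)]
        simp [S_step, Subsingleton.strictMono]

end StrictlyMonotoneTuples

theorem foldl_smul_eq {R M : Type*} [CommSemiring R] [AddCommMonoid M] [Module R M] {m : ℕ}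
    (φ : Fin (m + 1) → Module.Dual R M) (t : Fin (m + 1) → M) (a : M) :
    Fin.foldl (m + 1) (fun x j => φ j x • t j) a =
      ((∏ i : Fin m, φ i.succ (t i.castSucc)) * φ 0 a) • t (Fin.last m) := by
  induction m with
  | zero => simp [Fin.foldl_succ_last]
  | succ m ih =>
    rw [Fin.foldl_succ_last, ih (fun j => φ j.castSucc) fun j => t j.castSucc,
      Fin.prod_univ_castSucc]
    simp only [map_smul, smul_eq_mul, Fin.succ_last, Fin.succ_castSucc, Fin.castSucc_zero]
    congr 1
    ring

theorem thurston_bennequin_dehn_twist_composition_general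
    {R M : Type*} [CommSemiring R] [AddCommMonoid M] [Module R M]
    (l : ℕ) (φ : Fin l → Module.Dual R M) (t : Fin l → M) (ε : Fin l → R)
    (τ : Fin l → M → M)
    (hτ : ∀ k x, τ k x = x + (ε k * φ k x) • t k)
    (a : M) :
    (List.ofFn τ).foldl (fun x f => f x) a =
      a + ∑ m ∈ Finset.range l,
        ∑ k : Fin (m + 1) → Fin l with StrictMono k,
          ((∏ j, ε (k j)) *
            (∏ i : Fin m, φ (k i.succ) (t (k i.castSucc))) *
            φ (k 0) a) • t (k (Fin.last m)) := by
  let N (k : Fin l) : M →ₗ[R] M := (ε k • φ k).smulRight (t k)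
  calc (List.ofFn τ).foldl (fun x f => f x) a
    _ = Fin.foldl l (fun x k => x + (N k).toAddMonoidHom x) a := by
      rw [Fin.foldl_eq_foldl_finRange, List.ofFn_eq_map, List.foldl_map]
      simp [hτ, N]
    _ = a + ∑ m ∈ Finset.range l, ∑ k : Fin (m + 1) → Fin l with StrictMono k,
          Fin.foldl (m + 1) (fun x j => (ε (k j) • φ (k j)) x • t (k j)) a := by
      rw [foldl_add_apply_eq_sum, Finset.sum_range_succ', add_comm]
      simp [Subsingleton.strictMono, N]
    _ = _ := by
      refine congrArg (a + ·) (Finset.sum_congr rfl fun m _ => Finset.sum_congr rfl fun k _ => ?_)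
      rw [foldl_smul_eq (fun j => ε (k j) • φ (k j)) fun j => t (k j), Fin.prod_univ_succ]
      simp only [LinearMap.smul_apply, smul_eq_mul, Finset.prod_mul_distrib]
      congr 1
      ring

/-- For a ℤ-bilinear form `B` on a ℤ-module `M`, elements
`t₁, …, t_l`, signs `ε₁, …, ε_l ∈ {1, -1}` and the "twist" maps
`τ_k (x) = x + ε_k ⬝ B(t_k, x) ⬝ t_k`, the composition `Φ = τ_l ∘ ⋯ ∘ τ₁`
satisfies
`Φ(a) = a + Σ_{m=1}^{l} Σ_{1 ≤ k₁ < ⋯ < k_m ≤ l} ε_{k₁}⋯ε_{k_m}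
  B(t_{k_m}, t_{k_{m-1}}) ⋯ B(t_{k₂}, t_{k₁}) B(t_{k₁}, a) ⬝ t_{k_m}`.
Strictly increasing tuples `1 ≤ k₁ < ⋯ < k_m ≤ l` of length `m = m' + 1`
(with `m' ∈ {0, …, l-1}`) are encoded as strictly monotone maps
`k : Fin (m' + 1) → Fin l`. -/
theorem thurston_bennequin_dehn_twist_composition
    {M : Type*} [AddCommGroup M] [Module ℤ M]
    (B : M →ₗ[ℤ] M →ₗ[ℤ] ℤ) (l : ℕ) (t : Fin l → M) (ε : Fin l → ℤ)
    (hε : ∀ k, ε k = 1 ∨ ε k = -1)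
    (τ : Fin l → M → M)
    (hτ : ∀ k x, τ k x = x + (ε k * B (t k) x) • t k)
    (a : M) :
    (List.ofFn τ).foldl (fun x f => f x) a =
      a + ∑ m ∈ Finset.range l,
        ∑ k ∈ Finset.univ.filter (fun k : Fin (m + 1) → Fin l => StrictMono k),
          ((∏ j, ε (k j)) *
            (∏ i : Fin m, B (t (k i.succ)) (t (k i.castSucc))) *
            B (t (k 0)) a) • t (k (Fin.last m)) := by
  -- The `•` in the statement is the canonical action of `ℤ` on an additive group, whereas `B` is
  -- linear for the given module structure.
  obtain rfl : ‹Module ℤ M› = AddCommGroup.toIntModule M := Subsingleton.elim _ _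
  exact thurston_bennequin_dehn_twist_composition_general l (fun k => B (t k)) t ε τ hτ a
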